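/- Let (i,j) ∈ E be an edge of a finite connected simple graph G with ρ_min ≥ 2, and let the lazy parameters be α_u = 1/(ρ_u+1), with α_⋆ = min{α_i,α_j} if c_OR-0(i,j) ≥ 0 and α_⋆ = max{α_i,α_j} otherwise, and Δ_ij(α) = max{α_i,α_j} − min{α_i,α_j}. Fix ϑ ∈ ℝ and define s₀(ϑ) = (ϑ + Δ_ij(α))/(1 − α_⋆), 𝔎_□ = [𝔎(i,j) − 𝒮(i,j)]₊, s_u^□ = 𝔎_□·(2·ρ_min/ρ_max − 1), and the piecewise triangle envelope u_max(ϑ) given by: u_max(ϑ) = 0 if s₀(ϑ) ≤ −2𝔎_□; u_max(ϑ) = (s₀(ϑ) + 2𝔎_□)/𝔗(i,j) if −2𝔎_□ ≤ s₀(ϑ) ≤ s_u^□; u_max(ϑ) = (ρ_max/2)·(s₀(ϑ) + 𝔎_□) if s_u^□ ≤ s₀(ϑ) ≤ 𝔎_□; and u_max(ϑ) = ρ_max·s₀(ϑ) if s₀(ϑ) ≥ 𝔎_□. Then c_OR(i,j) ≤ ϑ implies c_BF(i,j) ≤ 𝔖(i,j) + 𝔗(i,j)·u_max(ϑ) + C₄(i,j).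 -/

import Mathlib

namespace Curv

open Finset

noncomputable section

variable {V : Type*} [Fintype V] [DecidableEq V] (G : SimpleGraph V) [DecidableRel G.Adj]

/-- `μ` is a probability distribution on the (finite) vertex set. -/
def IsProb (μ : V → ℝ) : Prop := (∀ x, 0 ≤ μ x) ∧ ∑ x, μ x = 1

/-- `π` is a coupling of `μ` and `ν`. -/
def IsCoupling (μ ν : V → ℝ) (π : V → V → ℝ) : Prop :=
  (∀ x y, 0 ≤ π x y) ∧ (∀ x, ∑ y, π x y = μ x) ∧ (∀ y, ∑ x, π x y = ν y)

/-- Transport cost of a plan `π` with respect to the shortest-path graph distance. -/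
def cost (π : V → V → ℝ) : ℝ := ∑ x, ∑ y, (G.dist x y : ℝ) * π x y

/-- Wasserstein-1 distance between two distributions on the vertex set. -/
def W1 (μ ν : V → ℝ) : ℝ := sInf {c : ℝ | ∃ π, IsCoupling μ ν π ∧ cost G π = c}

/-- Dirac mass at `u`. -/
def dirac (u : V) : V → ℝ := fun x => if x = u then 1 else 0

/-- Uniform distribution on the neighbours of `u`. -/
def unif (u : V) : V → ℝ := fun x => if G.Adj u x then ((G.degree u : ℝ))⁻¹ else 0

/-- Lazy random-walk measure with laziness parameter `α`. -/
def mGen (α : ℝ) (u : V) : V → ℝ := fun x => α * dirac u x + (1 - α) * unif G u x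

/-- Canonical laziness `1/(deg u + 1)`. -/
def alphaL (u : V) : ℝ := ((G.degree u : ℝ) + 1)⁻¹

/-- The lazy random-walk measure `m_u`. -/
def mLazy (u : V) : V → ℝ := mGen G (alphaL G u) u

/-- Ollivier–Ricci curvature (lazy). -/
def cOR (i j : V) : ℝ := 1 - W1 G (mLazy G i) (mLazy G j)

/-- Non-lazy Ollivier–Ricci curvature. -/
def cOR0 (i j : V) : ℝ := 1 - W1 G (unif G i) (unif G j)

/-- Positive part `[x]₊`. -/
def pos (x : ℝ) : ℝ := max x 0

/-- Triangle count `△(u,v)`. -/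
def tri (u v : V) : ℕ := (G.neighborFinset u ∩ G.neighborFinset v).card

/-- Unique neighbours `N(u) \ (N(v) ∪ {v})`. -/
def uniq (u v : V) : Finset V := G.neighborFinset u \ insert v (G.neighborFinset v)

/-- `ξ_u(u,v)`: unique neighbours of `u` having a neighbour among unique neighbours of `v`. -/
def xiSet (u v : V) : Finset V := (uniq G u v).filter fun k => ∃ w ∈ uniq G v u, G.Adj k w

/-- `Ξ_uv`. -/
def Xi (u v : V) : ℕ := (xiSet G u v).card + (xiSet G v u).card

/-- `□̃(k,u,v) = |N(k) ∩ (N(v)\(N(u)∪{u}))|`. -/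
def boxT (k u v : V) : ℕ := (G.neighborFinset k ∩ uniq G v u).card

/-- `ϖ_max(u,v)`. -/
def varpi (u v : V) : ℕ :=
  max (((G.neighborFinset u).erase v).sup fun k => boxT G k u v)
      (((G.neighborFinset v).erase u).sup fun w => boxT G w v u)

/-- `þ_max(u,v) = ϖ_max(u,v)·max{ρ_u,ρ_v}`. -/
def thMax (u v : V) : ℕ := varpi G u v * max (G.degree u) (G.degree v)

/-- Edgewise 4-cycle coefficient `C₄(u,v)`. -/
def C4 (u v : V) : ℝ := if 0 < Xi G u v then (Xi G u v : ℝ) / (thMax G u v : ℝ) else 0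

/-- Graph-wide 4-cycle constant `C₄(G)`. -/
def C4Graph : ℝ := sSup {x : ℝ | ∃ u v, G.Adj u v ∧ x = C4 G u v}

def rhoMin (i j : V) : ℕ := min (G.degree i) (G.degree j)

def rhoMax (i j : V) : ℕ := max (G.degree i) (G.degree j)

/-- `𝔖(i,j)`. -/
def frakS (i j : V) : ℝ := 2 / (G.degree i : ℝ) + 2 / (G.degree j : ℝ) - 2

/-- `𝔗(i,j)`. -/
def frakT (i j : V) : ℝ := 2 / (rhoMax G i j : ℝ) + 1 / (rhoMin G i j : ℝ)

/-- `𝔎(i,j)`. -/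
def frakK (i j : V) : ℝ := 1 - 1 / (rhoMin G i j : ℝ) - 1 / (rhoMax G i j : ℝ)

/-- `Z_min(i,j)`. -/
def Zmin (i j : V) : ℝ := (tri G i j : ℝ) / (rhoMin G i j : ℝ)

/-- `Z_max(i,j)`. -/
def Zmax (i j : V) : ℝ := (tri G i j : ℝ) / (rhoMax G i j : ℝ)

/-- Balanced Forman curvature. -/
def cBF (i j : V) : ℝ :=
  if rhoMin G i j = 1 then 0
  else frakS G i j + frakT G i j * (tri G i j : ℝ) + C4 G i j

/-- `M` is a matching in the cross-edge bipartite graph `B_ij`. -/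
def IsCrossMatching (i j : V) (M : Finset (V × V)) : Prop :=
  (∀ p ∈ M, p.1 ∈ uniq G i j ∧ p.2 ∈ uniq G j i ∧ G.Adj p.1 p.2) ∧
  (∀ p ∈ M, ∀ q ∈ M, p ≠ q → p.1 ≠ q.1 ∧ p.2 ≠ q.2)

/-- Maximum matching size `𝔪(i,j)` in the cross-edge bipartite graph. -/
def matchNum (i j : V) : ℕ :=
  sSup {n : ℕ | ∃ M : Finset (V × V), IsCrossMatching G i j M ∧ M.card = n}

/-- `𝒮(i,j) = 𝔪(i,j)/ρ_max`. -/
def SS (i j : V) : ℝ := (matchNum G i j : ℝ) / (rhoMax G i j : ℝ)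

/-- Lazy per-neighbour weight `w_u = (1-α)/ρ_u`. -/
def wA (α : ℝ) (u : V) : ℝ := (1 - α) / (G.degree u : ℝ)

/-- Lazy conductance sum `Σ`. -/
def SigmaA (αi αj : ℝ) (i j : V) : ℝ :=
  (G.degree i : ℝ) / (1 - αi) + (G.degree j : ℝ) / (1 - αj)

/-- `Const_α`. -/
def ConstA (αi αj : ℝ) (i j : V) : ℝ :=
  -1 + 2 * (min αi ((1 - αj) / (G.degree j : ℝ)) + min αj ((1 - αi) / (G.degree i : ℝ)))
    + (pos (αi - (1 - αj) / (G.degree j : ℝ)) + pos ((1 - αj) / (G.degree j : ℝ) - αi)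
      + pos (αj - (1 - αi) / (G.degree i : ℝ)) + pos ((1 - αi) / (G.degree i : ℝ) - αj))
    + ((G.degree i : ℝ) + (G.degree j : ℝ) - 2) / SigmaA G αi αj i j

/-- `Slope_α`. -/
def SlopeA (αi αj : ℝ) (i j : V) : ℝ := wA G αi i + wA G αj j - 2 / SigmaA G αi αj i j

/-- `α_⋆`: `α_min` when the non-lazy curvature is nonnegative, `α_max` otherwise. -/
def alphaStar (i j : V) : ℝ :=
  if 0 ≤ cOR0 G i j then min (alphaL G i) (alphaL G j) else max (alphaL G i) (alphaL G j)

/-- `Δ_ij(α) = α_max − α_min` for the canonical laziness. -/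
def DeltaL (i j : V) : ℝ := max (alphaL G i) (alphaL G j) - min (alphaL G i) (alphaL G j)

/-- Quadrangle-effective deficit `𝔎_□ = [𝔎 − 𝒮]₊`. -/
def Ksq (i j : V) : ℝ := pos (frakK G i j - SS G i j)

/-- Non-lazy proxy `s₀(ϑ) = (ϑ + Δ_ij(α))/(1 − α_⋆)`. -/
def sZero (i j : V) (t : ℝ) : ℝ := (t + DeltaL G i j) / (1 - alphaStar G i j)

/-- Breakpoint `s_u^□ = 𝔎_□·(2ρ_min/ρ_max − 1)`. -/
def sU (i j : V) : ℝ := Ksq G i j * (2 * (rhoMin G i j : ℝ) / (rhoMax G i j : ℝ) - 1)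

/-- Piecewise quadrangle triangle-envelope `u_max(ϑ)`. -/
def uMax (i j : V) (t : ℝ) : ℝ :=
  if sZero G i j t ≤ -2 * Ksq G i j then 0
  else if sZero G i j t ≤ sU G i j then (sZero G i j t + 2 * Ksq G i j) / frakT G i j
  else if sZero G i j t ≤ Ksq G i j then
    ((rhoMax G i j : ℝ) / 2) * (sZero G i j t + Ksq G i j)
  else (rhoMax G i j : ℝ) * sZero G i j t

/-!
An explicit transport plan bounds `W₁(ν_i, ν_j)` from above. Mass `1/ρ_max` stays put at every
common neighbour and moves at cost `1` along every edge of a maximum cross matching; what is left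
is routed along walks of length at most `3` through `i` and `j`, so that
`W₁(ν_i, ν_j) ≤ 1 - △/ρ_max + [𝔎_□ - △/ρ_min]₊ + [𝔎_□ - △/ρ_max]₊`.

A bound `c` on the cost between `ν_i` and `ν_j` passes to the lazy measures: `δ_i` reaches `ν_j`
either through `ν_i` or through `δ_j`, hence at cost at most `1 + min 1 c`, and this is the only
additional move caused by the mismatch of the two laziness parameters. So `c_OR ≤ ϑ` forces
`1 - c ≤ s₀(ϑ)`.

Together, `△/ρ_max - [𝔎_□ - △/ρ_min]₊ - [𝔎_□ - △/ρ_max]₊ ≤ s₀(ϑ)`. The left side is one of three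
affine functions of `△`, and `u_max(ϑ)` dominates all three solutions of the resulting affine
inequalities; therefore `△ ≤ u_max(ϑ)`.
-/

/-- An upper bound on the optimal transport cost: some coupling of `μ` and `ν` costs at most `c`.
The total masses are not normalised, so that plans can be assembled from plans between
submeasures. -/
def TransportLE (μ ν : V → ℝ) (c : ℝ) : Prop := ∃ π, IsCoupling μ ν π ∧ cost G π ≤ c

/-- The measure giving mass `w` to each vertex of `S` and no mass elsewhere. -/
def constOn (S : Finset V) (w : ℝ) : V → ℝ := fun x => if x ∈ S then w else 0

/-- Gluing of a plan `π` into `ν` with a plan `σ` out of `ν`: the mass travelling from `x` through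
`y` to `z`. The junk value at `ν y = 0` is correct, since no mass passes through such a `y`. -/
def glue (ν : V → ℝ) (π σ : V → V → ℝ) (x y z : V) : ℝ := π x y * σ y z / ν y

section Coupling

omit [DecidableEq V]

variable {μ ν τ : V → ℝ} {π σ : V → V → ℝ}

theorem IsCoupling.eq_zero_of_left (h : IsCoupling μ ν π) {x : V} (hx : μ x = 0) (y : V) :
    π x y = 0 := by
  rw [← h.2.1 x, sum_eq_zero_iff_of_nonneg fun y _ => h.1 x y] at hx
  exact hx y (mem_univ y)

theorem IsCoupling.eq_zero_of_right (h : IsCoupling μ ν π) (x : V) {y : V} (hy : ν y = 0) :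
    π x y = 0 := by
  rw [← h.2.2 y, sum_eq_zero_iff_of_nonneg fun x _ => h.1 x y] at hy
  exact hy x (mem_univ x)

theorem IsCoupling.glue_nonneg (hπ : IsCoupling μ ν π) (hσ : IsCoupling ν τ σ) (x y z : V) :
    0 ≤ glue ν π σ x y z :=
  div_nonneg (mul_nonneg (hπ.1 x y) (hσ.1 y z)) (hσ.2.1 y ▸ sum_nonneg fun z _ => hσ.1 y z)

theorem IsCoupling.sum_glue_right (hπ : IsCoupling μ ν π) (hσ : IsCoupling ν τ σ) (x y : V) :
    ∑ z, glue ν π σ x y z = π x y := by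
  simp only [glue]
  rw [← sum_div, ← mul_sum, hσ.2.1]
  exact mul_div_cancel_of_imp (hπ.eq_zero_of_right x)

theorem IsCoupling.sum_glue_left (hπ : IsCoupling μ ν π) (hσ : IsCoupling ν τ σ) (y z : V) :
    ∑ x, glue ν π σ x y z = σ y z := by
  simp only [glue]
  rw [← sum_div, ← sum_mul, hπ.2.2]
  exact mul_div_cancel_left_of_imp fun h => hσ.eq_zero_of_left h z

variable {G} in
omit [DecidableRel G.Adj] in
theorem IsCoupling.dist_mul_glue_le (hπ : IsCoupling μ ν π) (hσ : IsCoupling ν τ σ) {x y : V}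
    (hreach : μ x ≠ 0 → ν y ≠ 0 → G.Reachable x y) (z : V) :
    (G.dist x z : ℝ) * glue ν π σ x y z ≤
      (G.dist x y : ℝ) * glue ν π σ x y z + (G.dist y z : ℝ) * glue ν π σ x y z := by
  by_cases hxy : π x y = 0
  · simp [glue, hxy]
  have reachable : G.Reachable x y := hreach (fun h => hxy (hπ.eq_zero_of_left h y))
    (fun h => hxy (hπ.eq_zero_of_right x h))
  rw [← add_mul]
  exact mul_le_mul_of_nonneg_right (mod_cast reachable.dist_triangle_left z)
    (hπ.glue_nonneg hσ x y z)

theorem sum_div_sum_smul (hμ : ∀ x, 0 ≤ μ x) : ((∑ x, μ x) / ∑ x, μ x) • μ = μ := by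
  rcases eq_or_ne (∑ x, μ x) 0 with h | h
  · rw [sum_eq_zero_iff_of_nonneg fun x _ => hμ x] at h
    funext x
    simp [h x (mem_univ x)]
  · rw [div_self h, one_smul]

end Coupling

namespace TransportLE

variable {G} {μ ν μ' ν' τ : V → ℝ} {c c' : ℝ}

omit [DecidableEq V] [DecidableRel G.Adj]

theorem W1_le (h : TransportLE G μ ν c) : W1 G μ ν ≤ c := by
  obtain ⟨π, hπ, hcost⟩ := h
  have bdd : BddBelow {c : ℝ | ∃ π, IsCoupling μ ν π ∧ cost G π = c} := by
    refine ⟨0, ?_⟩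
    rintro _ ⟨σ, hσ, rfl⟩
    exact sum_nonneg fun x _ => sum_nonneg fun y _ => mul_nonneg (Nat.cast_nonneg _) (hσ.1 x y)
  exact (csInf_le bdd ⟨π, hπ, rfl⟩).trans hcost

theorem mono (h : TransportLE G μ ν c) (hc : c ≤ c') : TransportLE G μ ν c' :=
  let ⟨π, hπ, hcost⟩ := h
  ⟨π, hπ, hcost.trans hc⟩

theorem add (h : TransportLE G μ ν c) (h' : TransportLE G μ' ν' c') :
    TransportLE G (μ + μ') (ν + ν') (c + c') := by
  obtain ⟨π, ⟨hπ, hμ, hν⟩, hcost⟩ := h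
  obtain ⟨π', ⟨hπ', hμ', hν'⟩, hcost'⟩ := h'
  refine ⟨fun x y => π x y + π' x y, ⟨fun x y => add_nonneg (hπ x y) (hπ' x y), fun x => ?_,
    fun y => ?_⟩, ?_⟩
  · rw [sum_add_distrib, hμ, hμ', Pi.add_apply]
  · rw [sum_add_distrib, hν, hν', Pi.add_apply]
  · simpa only [cost, mul_add, sum_add_distrib] using add_le_add hcost hcost'

theorem smul (h : TransportLE G μ ν c) {r : ℝ} (hr : 0 ≤ r) :
    TransportLE G (r • μ) (r • ν) (r * c) := by
  obtain ⟨π, ⟨hπ, hμ, hν⟩, hcost⟩ := h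
  refine ⟨fun x y => r * π x y, ⟨fun x y => mul_nonneg hr (hπ x y), fun x => ?_,
    fun y => ?_⟩, ?_⟩
  · rw [← mul_sum, hμ, Pi.smul_apply, smul_eq_mul]
  · rw [← mul_sum, hν, Pi.smul_apply, smul_eq_mul]
  · simpa only [cost, mul_left_comm _ r, ← mul_sum] using mul_le_mul_of_nonneg_left hcost hr

theorem symm (h : TransportLE G μ ν c) : TransportLE G ν μ c := by
  obtain ⟨π, ⟨hπ, hμ, hν⟩, hcost⟩ := h
  refine ⟨fun x y => π y x, ⟨fun x y => hπ y x, hν, hμ⟩, ?_⟩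
  rwa [cost, sum_comm, show ∑ y, ∑ x, (G.dist x y : ℝ) * π y x = cost G π by
    simp only [cost, G.dist_comm]]

theorem zero : TransportLE G (0 : V → ℝ) 0 0 :=
  ⟨0, ⟨fun _ _ => le_rfl, fun _ => by simp, fun _ => by simp⟩, by simp [cost]⟩

theorem sum {ι : Type*} (s : Finset ι) {μ ν : ι → V → ℝ} {c : ι → ℝ}
    (h : ∀ k ∈ s, TransportLE G (μ k) (ν k) (c k)) :
    TransportLE G (∑ k ∈ s, μ k) (∑ k ∈ s, ν k) (∑ k ∈ s, c k) := by
  induction s using Finset.cons_induction with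
  | empty => exact zero
  | cons k s hk ih =>
    simp only [sum_cons]
    exact (h k (mem_cons_self k s)).add (ih fun l hl => h l (mem_cons_of_mem hl))

theorem trans (hμν : TransportLE G μ ν c) (hντ : TransportLE G ν τ c')
    (hreach : ∀ x y, μ x ≠ 0 → ν y ≠ 0 → G.Reachable x y) : TransportLE G μ τ (c + c') := by
  obtain ⟨π, hπ, hcost⟩ := hμν
  obtain ⟨σ, hσ, hcost'⟩ := hντ
  refine ⟨fun x z => ∑ y, glue ν π σ x y z,
    ⟨fun x z => sum_nonneg fun y _ => hπ.glue_nonneg hσ x y z, fun x => ?_, fun z => ?_⟩, ?_⟩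
  · rw [sum_comm]
    simp only [hπ.sum_glue_right hσ, hπ.2.1]
  · rw [sum_comm]
    simp only [hπ.sum_glue_left hσ, hσ.2.2]
  calc ∑ x, ∑ z, (G.dist x z : ℝ) * ∑ y, glue ν π σ x y z
      = ∑ x, ∑ y, ∑ z, (G.dist x z : ℝ) * glue ν π σ x y z := by
        simp only [mul_sum]
        exact sum_congr rfl fun x _ => sum_comm
    _ ≤ ∑ x, ∑ y, ∑ z, ((G.dist x y : ℝ) * glue ν π σ x y z +
          (G.dist y z : ℝ) * glue ν π σ x y z) :=
        sum_le_sum fun x _ => sum_le_sum fun y _ => sum_le_sum fun z _ =>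
          hπ.dist_mul_glue_le hσ (hreach x y) z
    _ = cost G π + ∑ y, ∑ z, ∑ x, (G.dist y z : ℝ) * glue ν π σ x y z := by
        simp only [sum_add_distrib, ← mul_sum, hπ.sum_glue_right hσ, cost]
        rw [sum_comm_cycle, sum_comm_cycle]
        simp only [mul_sum]
    _ = cost G π + cost G σ := by
        simp only [← mul_sum, hπ.sum_glue_left hσ, cost]
    _ ≤ c + c' := add_le_add hcost hcost'

theorem prod (hμ : ∀ x, 0 ≤ μ x) (hν : ∀ y, 0 ≤ ν y) :
    TransportLE G ((∑ y, ν y) • μ) ((∑ x, μ x) • ν)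
      (∑ x, ∑ y, (G.dist x y : ℝ) * (μ x * ν y)) := by
  refine ⟨fun x y => μ x * ν y, ⟨fun x y => mul_nonneg (hμ x) (hν y), fun x => ?_,
    fun y => ?_⟩, le_rfl⟩
  · rw [← mul_sum, Pi.smul_apply, smul_eq_mul, mul_comm]
  · rw [← sum_mul, Pi.smul_apply, smul_eq_mul]

theorem scaled_prod {p d : ℝ} (hμ : ∀ x, 0 ≤ μ x) (hν : ∀ y, 0 ≤ ν y) (hp : 0 ≤ p)
    (hpμ : p ≤ ∑ x, μ x) (hpν : p ≤ ∑ y, ν y)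
    (hd : ∀ x y, μ x ≠ 0 → ν y ≠ 0 → (G.dist x y : ℝ) ≤ d) :
    TransportLE G ((p / ∑ x, μ x) • μ) ((p / ∑ y, ν y) • ν) (d * p) := by
  rcases hp.eq_or_lt with rfl | hp
  · simpa using zero (G := G)
  set m := ∑ x, μ x with hm
  set n := ∑ y, ν y with hn
  have hm0 : 0 < m := hp.trans_le hpμ
  have hn0 : 0 < n := hp.trans_le hpν
  have dist_le : ∑ x, ∑ y, (G.dist x y : ℝ) * (μ x * ν y) ≤ d * (m * n) := by
    rw [hm, hn, sum_mul_sum, mul_sum]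
    simp only [mul_sum]
    refine sum_le_sum fun x _ => sum_le_sum fun y _ => ?_
    by_cases hxy : μ x * ν y = 0
    · simp [hxy]
    · exact mul_le_mul_of_nonneg_right (hd x y (left_ne_zero_of_mul hxy)
        (right_ne_zero_of_mul hxy)) (mul_nonneg (hμ x) (hν y))
  have scaled := ((prod hμ hν).mono dist_le).smul (r := p / (m * n)) (by positivity)
  convert scaled using 1
  · rw [smul_smul, ← hn]
    congr 1
    field_simp
  · rw [smul_smul, ← hm]
    congr 1
    field_simp
  · field_simp

theorem block {ι κ : Type*} [Fintype ι] [Fintype κ] {μ : ι → V → ℝ} {ν : κ → V → ℝ}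
    {d p : ι → κ → ℝ} (hμ : ∀ k x, 0 ≤ μ k x) (hν : ∀ l y, 0 ≤ ν l y) (hp : ∀ k l, 0 ≤ p k l)
    (hrow : ∀ k, ∑ l, p k l = ∑ x, μ k x) (hcol : ∀ l, ∑ k, p k l = ∑ y, ν l y)
    (hd : ∀ k l x y, μ k x ≠ 0 → ν l y ≠ 0 → (G.dist x y : ℝ) ≤ d k l) :
    TransportLE G (∑ k, μ k) (∑ l, ν l) (∑ k, ∑ l, d k l * p k l) := by
  have cell : ∀ k l, TransportLE G ((p k l / ∑ x, μ k x) • μ k) ((p k l / ∑ y, ν l y) • ν l)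
      (d k l * p k l) := fun k l =>
    scaled_prod (hμ k) (hν l) (hp k l)
      (hrow k ▸ single_le_sum (f := p k) (fun l _ => hp k l) (mem_univ l))
      (hcol l ▸ single_le_sum (f := fun k => p k l) (fun k _ => hp k l) (mem_univ k)) (hd k l)
  have total := sum univ fun k _ => sum univ fun l _ => cell k l
  rw [sum_comm (f := fun k l => (p k l / ∑ y, ν l y) • ν l)] at total
  simpa only [← sum_smul, ← sum_div, hrow, hcol, sum_div_sum_smul (hμ _),
    sum_div_sum_smul (hν _)] using total

end TransportLE

section Measures

omit [Fintype V] in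
theorem constOn_nonneg (S : Finset V) {w : ℝ} (hw : 0 ≤ w) (x : V) : 0 ≤ constOn S w x := by
  unfold constOn
  split_ifs
  exacts [hw, le_rfl]

omit [Fintype V] in
theorem mem_of_constOn_ne_zero {S : Finset V} {w : ℝ} {x : V} (h : constOn S w x ≠ 0) : x ∈ S := by
  by_contra hx
  exact h (if_neg hx)

omit [Fintype V] in
theorem constOn_add (S : Finset V) (w w' : ℝ) :
    constOn S (w + w') = constOn S w + constOn S w' := by
  funext x
  by_cases hx : x ∈ S <;> simp [constOn, hx]

omit [Fintype V] in
theorem constOn_sub_nonneg {S S' : Finset V} {w w' : ℝ} (hS : S' ⊆ S) (hw : 0 ≤ w) (hw' : w' ≤ w)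
    (x : V) : 0 ≤ (constOn S w - constOn S' w') x := by
  by_cases hx : x ∈ S'
  · simpa [constOn, hx, hS hx] using hw'
  · simpa [constOn, hx] using constOn_nonneg S hw x

omit [Fintype V] in
theorem mem_of_constOn_sub_ne_zero {S S' : Finset V} {w w' : ℝ} (hS : S' ⊆ S) {x : V}
    (h : (constOn S w - constOn S' w') x ≠ 0) : x ∈ S := by
  by_contra hx
  simp [constOn, hx, mt (@hS x) hx] at h

theorem sum_constOn (S : Finset V) (w : ℝ) : ∑ x, constOn S w x = #S * w := by
  simp [constOn]

omit [Fintype V] in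
theorem sum_smul_dirac_eq_constOn_image {ι : Type*} (s : Finset ι) {f : ι → V}
    (hf : Set.InjOn f s) (w : ℝ) : ∑ p ∈ s, w • dirac (f p) = constOn (s.image f) w := by
  rw [← sum_image (f := fun v => w • dirac v) hf]
  funext x
  simp [constOn, dirac, Finset.sum_apply]

omit [Fintype V] in
theorem dirac_nonneg (u x : V) : 0 ≤ dirac u x := by
  unfold dirac
  split_ifs
  exacts [zero_le_one, le_rfl]

theorem sum_dirac (u : V) : ∑ x, dirac u x = 1 := by
  simp [dirac]

omit [DecidableEq V] in
theorem unif_nonneg (u x : V) : 0 ≤ unif G u x := by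
  unfold unif
  split_ifs <;> positivity

theorem unif_eq_constOn (u : V) : unif G u = constOn (G.neighborFinset u) (G.degree u : ℝ)⁻¹ := by
  funext x
  simp [unif, constOn]

variable {G} {i j : V}

omit [DecidableEq V] in
theorem degree_pos_of_adj (hij : G.Adj i j) : 0 < G.degree i :=
  (G.degree_pos_iff_exists_adj i).2 ⟨j, hij⟩

omit [DecidableEq V] in
theorem sum_unif_of_adj (hij : G.Adj i j) : ∑ x, unif G i x = 1 := by
  classical
  rw [unif_eq_constOn, sum_constOn, G.card_neighborFinset_eq_degree,
    mul_inv_cancel₀ (mod_cast (degree_pos_of_adj hij).ne')]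

namespace TransportLE

omit [DecidableRel G.Adj] in
theorem dirac_dirac (x y : V) : TransportLE G (dirac x) (dirac y) (G.dist x y) := by
  simpa [dirac] using prod (G := G) (dirac_nonneg x) (dirac_nonneg y)

omit [DecidableRel G.Adj] in
theorem constOn_image {ι : Type*} (s : Finset ι) {f g : ι → V} (hf : Set.InjOn f s)
    (hg : Set.InjOn g s) {w : ℝ} (hw : 0 ≤ w) :
    TransportLE G (constOn (s.image f) w) (constOn (s.image g) w)
      (∑ p ∈ s, w * G.dist (f p) (g p)) := by
  rw [← sum_smul_dirac_eq_constOn_image s hf, ← sum_smul_dirac_eq_constOn_image s hg]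
  exact sum s fun p _ => (dirac_dirac (f p) (g p)).smul hw

omit [DecidableRel G.Adj] in
theorem constOn_self (S : Finset V) {w : ℝ} (hw : 0 ≤ w) :
    TransportLE G (constOn S w) (constOn S w) 0 := by
  simpa using constOn_image (G := G) S Function.injective_id.injOn Function.injective_id.injOn hw

theorem dirac_unif_self (hij : G.Adj i j) : TransportLE G (dirac i) (unif G i) 1 := by
  have dist_le : ∀ x y, dirac i x ≠ 0 → unif G i y ≠ 0 → (G.dist x y : ℝ) ≤ 1 := by
    intro x y hx hy
    obtain rfl : x = i := by
      by_contra h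
      exact hx (if_neg h)
    have hxy : G.Adj x y := by
      by_contra h
      exact hy (if_neg h)
    simp [SimpleGraph.dist_eq_one_iff_adj.2 hxy]
  simpa [sum_dirac, sum_unif_of_adj hij] using
    scaled_prod (dirac_nonneg i) (unif_nonneg G i) zero_le_one (sum_dirac i).ge
      (sum_unif_of_adj hij).ge dist_le

end TransportLE

end Measures

section Laziness

variable {G} {i j : V} {c : ℝ}

namespace TransportLE

theorem dirac_unif (hij : G.Adj i j) (h : TransportLE G (unif G i) (unif G j) c) :
    TransportLE G (dirac i) (unif G j) (1 + min 1 c) := by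
  rcases le_total 1 c with hc | hc
  · rw [min_eq_left hc]
    have via_j := (dirac_dirac (G := G) i j).trans (dirac_unif_self hij.symm) fun x y hx hy => by
      rw [show x = i by simpa [dirac] using hx, show y = j by simpa [dirac] using hy]
      exact hij.reachable
    simpa [SimpleGraph.dist_eq_one_iff_adj.2 hij] using via_j
  · rw [min_eq_right hc]
    refine (dirac_unif_self hij).trans h fun x y hx hy => ?_
    rw [show x = i by simpa [dirac] using hx]
    exact SimpleGraph.Adj.reachable (by_contra fun hy' => hy (if_neg hy'))

theorem mGen_mGen (hij : G.Adj i j) (h : TransportLE G (unif G i) (unif G j) c) {α β γ : ℝ}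
    (hβ : 0 ≤ β) (hβγ : β ≤ γ) (hγα : γ ≤ α) (hα : α ≤ 1) :
    TransportLE G (mGen G α i) (mGen G β j) (γ + (1 - γ) * c + (α - β)) := by
  have hdd : TransportLE G (dirac i) (dirac j) 1 := by
    simpa [SimpleGraph.dist_eq_one_iff_adj.2 hij] using dirac_dirac (G := G) i j
  have plan := ((hdd.smul hβ).add ((h.dirac_unif hij).smul (r := α - β) (by linarith))).add
    (h.smul (r := 1 - α) (by linarith))
  have mGen_i : mGen G α i = β • dirac i + (α - β) • dirac i + (1 - α) • unif G i := by
    funext x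
    simp only [mGen, Pi.add_apply, Pi.smul_apply, smul_eq_mul]
    ring
  have mGen_j : mGen G β j = β • dirac j + (α - β) • unif G j + (1 - α) • unif G j := by
    funext x
    simp only [mGen, Pi.add_apply, Pi.smul_apply, smul_eq_mul]
    ring
  rw [mGen_i, mGen_j]
  refine plan.mono ?_
  rcases le_total 1 c with hc | hc
  · rw [min_eq_left hc]
    nlinarith [mul_nonneg (sub_nonneg.2 hγα) (sub_nonneg.2 hc)]
  · rw [min_eq_right hc]
    nlinarith [mul_nonneg (sub_nonneg.2 hβγ) (sub_nonneg.2 hc)]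

end TransportLE

omit [DecidableEq V] in
theorem alphaL_pos (u : V) : 0 < alphaL G u := by
  unfold alphaL
  positivity

omit [DecidableEq V] in
theorem alphaL_lt_one_of_adj (hij : G.Adj i j) : alphaL G i < 1 :=
  inv_lt_one_of_one_lt₀ (lt_add_of_pos_left 1 (mod_cast degree_pos_of_adj hij))

omit [DecidableEq V] in
theorem min_alphaL_le_alphaStar : min (alphaL G i) (alphaL G j) ≤ alphaStar G i j := by
  unfold alphaStar
  split_ifs
  exacts [le_rfl, min_le_max]

omit [DecidableEq V] in
theorem alphaStar_le_max_alphaL : alphaStar G i j ≤ max (alphaL G i) (alphaL G j) := by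
  unfold alphaStar
  split_ifs
  exacts [min_le_max, le_rfl]

theorem TransportLE.mLazy_mLazy (hij : G.Adj i j) (h : TransportLE G (unif G i) (unif G j) c) :
    TransportLE G (mLazy G i) (mLazy G j)
      (alphaStar G i j + (1 - alphaStar G i j) * c + DeltaL G i j) := by
  have lower := min_alphaL_le_alphaStar (G := G) (i := i) (j := j)
  have upper := alphaStar_le_max_alphaL (G := G) (i := i) (j := j)
  unfold DeltaL
  rcases le_total (alphaL G j) (alphaL G i) with hα | hα
  · rw [max_eq_left hα, min_eq_right hα] at *
    exact h.mGen_mGen hij (alphaL_pos j).le lower upper (alphaL_lt_one_of_adj hij).le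
  · rw [max_eq_right hα, min_eq_left hα] at *
    exact (h.symm.mGen_mGen hij.symm (alphaL_pos i).le lower upper
      (alphaL_lt_one_of_adj hij.symm).le).symm

theorem one_sub_le_sZero (hij : G.Adj i j) (h : TransportLE G (unif G i) (unif G j) c) {t : ℝ}
    (hOR : cOR G i j ≤ t) : 1 - c ≤ sZero G i j t := by
  have alphaStar_lt_one : alphaStar G i j < 1 := alphaStar_le_max_alphaL.trans_lt
    (max_lt (alphaL_lt_one_of_adj hij) (alphaL_lt_one_of_adj hij.symm))
  have W1_le := (h.mLazy_mLazy hij).W1_le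
  unfold cOR at hOR
  rw [sZero, le_div_iff₀ (sub_pos.2 alphaStar_lt_one)]
  linarith

end Laziness

section ResidualFlow

theorem pos_nonneg (x : ℝ) : 0 ≤ pos x := le_max_right x 0

theorem le_pos (x : ℝ) : x ≤ pos x := le_max_left x 0

theorem pos_mono {x y : ℝ} (h : x ≤ y) : pos x ≤ pos y := max_le_max_right 0 h

theorem pos_sub_self_anti {x y : ℝ} (h : x ≤ y) : pos y - y ≤ pos x - x := by
  unfold pos
  rcases max_cases y 0 with ⟨hy, _⟩ | ⟨hy, _⟩ <;> linarith [le_max_left x 0, le_max_right x 0]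

theorem pos_sub_self_le {x q : ℝ} (hq : 0 ≤ q) (h : 0 ≤ x + q) : pos x - x ≤ q := by
  unfold pos
  rcases max_cases x 0 with ⟨hx, _⟩ | ⟨hx, _⟩ <;> linarith

/-- A flow from three sources of mass `p`, `y - x`, `x + q` to two sinks of mass `q`, `y + p`. The
third source first serves the first sink, then the second source does, then the first one; so the
excess `pos x` and `pos y` (with `pos x - x`, `pos y - y` the unused capacity of the first sink) is
what has to reach the second sink from the third source, resp. from the last two. -/
def residualFlow (p q x y : ℝ) : Fin 3 → Fin 2 → ℝ :=
  ![![pos y - y, p - (pos y - y)],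
    ![(pos x - x) - (pos y - y), pos y - pos x],
    ![q - (pos x - x), pos x]]

/-- Upper bounds for the distances between the sources and sinks of `residualFlow`. -/
def residualDist : Fin 3 → Fin 2 → ℝ := ![![1, 1], ![1, 2], ![1, 3]]

variable {p q x y : ℝ}

theorem residualFlow_nonneg (hp : 0 ≤ p) (hq : 0 ≤ q) (hxy : x ≤ y) (hxq : 0 ≤ x + q)
    (hyp : 0 ≤ y + p) : ∀ k l, 0 ≤ residualFlow p q x y k l
  | 0, 0 => sub_nonneg.2 (le_pos y)
  | 0, 1 => sub_nonneg.2 (pos_sub_self_le hp hyp)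
  | 1, 0 => sub_nonneg.2 (pos_sub_self_anti hxy)
  | 1, 1 => sub_nonneg.2 (pos_mono hxy)
  | 2, 0 => sub_nonneg.2 (pos_sub_self_le hq hxq)
  | 2, 1 => pos_nonneg x

theorem sum_residualFlow_right (p q x y : ℝ) (k : Fin 3) :
    ∑ l, residualFlow p q x y k l = ![p, y - x, x + q] k := by
  fin_cases k <;> simp only [residualFlow, Fin.sum_univ_two, Matrix.cons_val, Fin.reduceFinMk,
    Fin.zero_eta, Fin.mk_one] <;> ring

theorem sum_residualFlow_left (p q x y : ℝ) (l : Fin 2) :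
    ∑ k, residualFlow p q x y k l = ![q, y + p] l := by
  fin_cases l <;> simp only [residualFlow, Fin.sum_univ_three, Matrix.cons_val, Fin.zero_eta,
    Fin.mk_one] <;> ring

theorem sum_residualDist_mul_residualFlow (p q x y : ℝ) :
    ∑ k, ∑ l, residualDist k l * residualFlow p q x y k l = p + q + y + pos x + pos y := by
  simp only [residualDist, residualFlow, Fin.sum_univ_three, Fin.sum_univ_two, Matrix.cons_val]
  ring

end ResidualFlow

section Neighbourhoods

variable {G} {i j : V} {M : Finset (V × V)}

theorem mem_uniq {u v x : V} : x ∈ uniq G u v ↔ G.Adj u x ∧ x ≠ v ∧ ¬G.Adj v x := by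
  simp [uniq]

theorem tri_comm (i j : V) : tri G i j = tri G j i := by
  rw [tri, tri, inter_comm]

theorem unif_eq_of_adj (hij : G.Adj i j) :
    unif G i = constOn {j} (G.degree i : ℝ)⁻¹ +
      constOn (G.neighborFinset i ∩ G.neighborFinset j) (G.degree i : ℝ)⁻¹ +
      constOn (uniq G i j) (G.degree i : ℝ)⁻¹ := by
  funext x
  rcases eq_or_ne x j with rfl | hxj
  · simp [unif, constOn, mem_uniq, hij]
  · by_cases hi : G.Adj i x <;> by_cases hj : G.Adj j x <;>
      simp [unif, constOn, mem_uniq, hxj, hi, hj]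

theorem card_uniq_mul_inv_degree (hij : G.Adj i j) :
    #(uniq G i j) * (G.degree i : ℝ)⁻¹ =
      1 - (G.degree i : ℝ)⁻¹ - tri G i j * (G.degree i : ℝ)⁻¹ := by
  have total := sum_unif_of_adj hij
  simp only [unif_eq_of_adj hij, Pi.add_apply, sum_add_distrib, sum_constOn, card_singleton,
    Nat.cast_one, one_mul] at total
  rw [tri]
  linarith

namespace IsCrossMatching

theorem injOn_fst (hM : IsCrossMatching G i j M) : Set.InjOn Prod.fst (M : Set (V × V)) :=
  fun p hp q hq h => by_contra fun hne => (hM.2 p hp q hq hne).1 h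

theorem injOn_snd (hM : IsCrossMatching G i j M) : Set.InjOn Prod.snd (M : Set (V × V)) :=
  fun p hp q hq h => by_contra fun hne => (hM.2 p hp q hq hne).2 h

theorem image_fst_subset (hM : IsCrossMatching G i j M) : M.image Prod.fst ⊆ uniq G i j :=
  image_subset_iff.2 fun p hp => (hM.1 p hp).1

theorem image_snd_subset (hM : IsCrossMatching G i j M) : M.image Prod.snd ⊆ uniq G j i :=
  image_subset_iff.2 fun p hp => (hM.1 p hp).2.1

theorem swap (hM : IsCrossMatching G i j M) :
    IsCrossMatching G j i (M.map (Equiv.prodComm V V).toEmbedding) := by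
  constructor
  · simp only [mem_map_equiv]
    exact fun p hp => ⟨(hM.1 _ hp).2.1, (hM.1 _ hp).1, (hM.1 _ hp).2.2.symm⟩
  · simp only [mem_map_equiv]
    exact fun p hp q hq hne => (hM.2 _ hp _ hq (by simpa using hne)).symm

theorem transportLE_image (hM : IsCrossMatching G i j M) {w : ℝ} (hw : 0 ≤ w) :
    TransportLE G (constOn (M.image Prod.fst) w) (constOn (M.image Prod.snd) w) (#M * w) := by
  refine (TransportLE.constOn_image M hM.injOn_fst hM.injOn_snd hw).mono (le_of_eq ?_)
  rw [← nsmul_eq_mul]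
  refine sum_eq_card_nsmul fun p hp => ?_
  rw [SimpleGraph.dist_eq_one_iff_adj.2 (hM.1 p hp).2.2, Nat.cast_one, mul_one]

end IsCrossMatching

theorem exists_isCrossMatching_card_eq_matchNum (i j : V) :
    ∃ M, IsCrossMatching G i j M ∧ #M = matchNum G i j :=
  Nat.sSup_mem (s := {n : ℕ | ∃ M : Finset (V × V), IsCrossMatching G i j M ∧ #M = n})
    ⟨0, ∅, by simp [IsCrossMatching], rfl⟩
    ⟨#(univ : Finset (V × V)), by rintro _ ⟨M, _, rfl⟩; exact card_le_univ M⟩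

end Neighbourhoods

section Residual

variable {G} {i j : V} {M : Finset (V × V)}

variable (G i j M) in
/-- What is left of `unif G i` once mass `1 / deg j` has stayed at each common neighbour and has
been sent along each edge of the cross matching `M`, split into its parts on `j`, on the common
neighbours and on the neighbours of `i` only. It is a nonnegative measure if `deg i ≤ deg j`. -/
def residualSupply : Fin 3 → V → ℝ :=
  ![constOn {j} (G.degree i : ℝ)⁻¹,
    constOn (G.neighborFinset i ∩ G.neighborFinset j) ((G.degree i : ℝ)⁻¹ - (G.degree j : ℝ)⁻¹),
    constOn (uniq G i j) (G.degree i : ℝ)⁻¹ - constOn (M.image Prod.fst) (G.degree j : ℝ)⁻¹]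

variable (G i j M) in
/-- What `unif G j` still lacks after the moves described at `residualSupply`, split into its parts
on `i` and on the neighbours of `j` only. -/
def residualDemand : Fin 2 → V → ℝ :=
  ![constOn {i} (G.degree j : ℝ)⁻¹,
    constOn (uniq G j i) (G.degree j : ℝ)⁻¹ - constOn (M.image Prod.snd) (G.degree j : ℝ)⁻¹]

variable (G i j M) in
/-- The mass that would remain after the common neighbours, weighted by `w` each, the matching `M`
and the endpoints `i` and `j` are served. -/
def residualDeficit (w : ℝ) : ℝ :=
  1 - (G.degree i : ℝ)⁻¹ - (G.degree j : ℝ)⁻¹ - #M * (G.degree j : ℝ)⁻¹ - tri G i j * w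

theorem unif_eq_add_sum_residualSupply (hij : G.Adj i j) (M : Finset (V × V)) :
    unif G i = constOn (G.neighborFinset i ∩ G.neighborFinset j) (G.degree j : ℝ)⁻¹ +
      constOn (M.image Prod.fst) (G.degree j : ℝ)⁻¹ + ∑ k, residualSupply G i j M k := by
  have split_common := constOn_add (G.neighborFinset i ∩ G.neighborFinset j)
    (G.degree j : ℝ)⁻¹ ((G.degree i : ℝ)⁻¹ - (G.degree j : ℝ)⁻¹)
  rw [add_sub_cancel] at split_common
  rw [unif_eq_of_adj hij, split_common, Fin.sum_univ_three]
  simp only [residualSupply, Matrix.cons_val]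
  abel

theorem unif_eq_add_sum_residualDemand (hij : G.Adj i j) (M : Finset (V × V)) :
    unif G j = constOn (G.neighborFinset i ∩ G.neighborFinset j) (G.degree j : ℝ)⁻¹ +
      constOn (M.image Prod.snd) (G.degree j : ℝ)⁻¹ + ∑ l, residualDemand G i j M l := by
  rw [unif_eq_of_adj hij.symm, inter_comm, Fin.sum_univ_two]
  simp only [residualDemand, Matrix.cons_val]
  abel

omit [DecidableEq V] in
theorem inv_degree_le_of_adj (hij : G.Adj i j) (hdeg : G.degree i ≤ G.degree j) :
    (G.degree j : ℝ)⁻¹ ≤ (G.degree i : ℝ)⁻¹ :=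
  inv_anti₀ (mod_cast degree_pos_of_adj hij) (mod_cast hdeg)

theorem residualSupply_nonneg (hij : G.Adj i j) (hdeg : G.degree i ≤ G.degree j)
    (hM : IsCrossMatching G i j M) : ∀ k x, 0 ≤ residualSupply G i j M k x
  | 0 => constOn_nonneg _ (by positivity)
  | 1 => constOn_nonneg _ (sub_nonneg.2 (inv_degree_le_of_adj hij hdeg))
  | 2 => constOn_sub_nonneg hM.image_fst_subset (by positivity) (inv_degree_le_of_adj hij hdeg)

theorem residualDemand_nonneg (hM : IsCrossMatching G i j M) :
    ∀ l y, 0 ≤ residualDemand G i j M l y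
  | 0 => constOn_nonneg _ (by positivity)
  | 1 => constOn_sub_nonneg hM.image_snd_subset (by positivity) le_rfl

theorem sum_residualSupply (hij : G.Adj i j) (hM : IsCrossMatching G i j M) (k : Fin 3) :
    ∑ x, residualSupply G i j M k x = ![(G.degree i : ℝ)⁻¹,
      residualDeficit G i j M (G.degree j : ℝ)⁻¹ - residualDeficit G i j M (G.degree i : ℝ)⁻¹,
      residualDeficit G i j M (G.degree i : ℝ)⁻¹ + (G.degree j : ℝ)⁻¹] k := by
  match k with
  | 0 => simp [residualSupply, sum_constOn]
  | 1 =>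
    simp only [residualSupply, residualDeficit, sum_constOn, Matrix.cons_val, tri]
    ring
  | 2 =>
    simp only [residualSupply, residualDeficit, Matrix.cons_val, Pi.sub_apply, sum_sub_distrib,
      sum_constOn, card_uniq_mul_inv_degree hij, card_image_of_injOn hM.injOn_fst]
    ring

theorem sum_residualDemand (hij : G.Adj i j) (hM : IsCrossMatching G i j M) (l : Fin 2) :
    ∑ y, residualDemand G i j M l y = ![(G.degree j : ℝ)⁻¹,
      residualDeficit G i j M (G.degree j : ℝ)⁻¹ + (G.degree i : ℝ)⁻¹] l := by
  match l with
  | 0 => simp [residualDemand, sum_constOn]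
  | 1 =>
    simp only [residualDemand, residualDeficit, Matrix.cons_val, Pi.sub_apply, sum_sub_distrib,
      sum_constOn, card_uniq_mul_inv_degree hij.symm, card_image_of_injOn hM.injOn_snd,
      tri_comm j i]
    ring

theorem dist_le_residualDist (hij : G.Adj i j) (hM : IsCrossMatching G i j M) (k : Fin 3)
    (l : Fin 2) (x y : V) (hx : residualSupply G i j M k x ≠ 0)
    (hy : residualDemand G i j M l y ≠ 0) : (G.dist x y : ℝ) ≤ residualDist k l := by
  have eq_j : residualSupply G i j M 0 x ≠ 0 → x = j := fun h =>
    mem_singleton.1 (mem_of_constOn_ne_zero h)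
  have adj_common : residualSupply G i j M 1 x ≠ 0 → G.Adj i x ∧ G.Adj j x := fun h => by
    simpa using mem_of_constOn_ne_zero h
  have adj_i : residualSupply G i j M 2 x ≠ 0 → G.Adj i x := fun h =>
    (mem_uniq.1 (mem_of_constOn_sub_ne_zero hM.image_fst_subset h)).1
  have eq_i : residualDemand G i j M 0 y ≠ 0 → y = i := fun h =>
    mem_singleton.1 (mem_of_constOn_ne_zero h)
  have adj_j : residualDemand G i j M 1 y ≠ 0 → G.Adj j y := fun h =>
    (mem_uniq.1 (mem_of_constOn_sub_ne_zero hM.image_snd_subset h)).1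
  suffices walk : ∃ w : G.Walk x y, (w.length : ℝ) ≤ residualDist k l by
    obtain ⟨w, hw⟩ := walk
    exact le_trans (mod_cast SimpleGraph.dist_le w) hw
  match k, l with
  | 0, 0 =>
    obtain rfl := eq_j hx
    obtain rfl := eq_i hy
    exact ⟨hij.symm.toWalk, by simp [residualDist]⟩
  | 0, 1 =>
    obtain rfl := eq_j hx
    exact ⟨(adj_j hy).toWalk, by simp [residualDist]⟩
  | 1, 0 =>
    obtain rfl := eq_i hy
    exact ⟨(adj_common hx).1.symm.toWalk, by simp [residualDist]⟩
  | 1, 1 => exact ⟨.cons (adj_common hx).2.symm (adj_j hy).toWalk, by simp [residualDist]⟩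
  | 2, 0 =>
    obtain rfl := eq_i hy
    exact ⟨(adj_i hx).symm.toWalk, by simp [residualDist]⟩
  | 2, 1 => exact ⟨.cons (adj_i hx).symm (.cons hij (adj_j hy).toWalk), by simp [residualDist]⟩

theorem transportLE_residual (hij : G.Adj i j) (hdeg : G.degree i ≤ G.degree j)
    (hM : IsCrossMatching G i j M) :
    TransportLE G (∑ k, residualSupply G i j M k) (∑ l, residualDemand G i j M l)
      ((G.degree i : ℝ)⁻¹ + (G.degree j : ℝ)⁻¹ + residualDeficit G i j M (G.degree j : ℝ)⁻¹ +
        pos (residualDeficit G i j M (G.degree i : ℝ)⁻¹) +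
        pos (residualDeficit G i j M (G.degree j : ℝ)⁻¹)) := by
  have supply_nonneg := residualSupply_nonneg hij hdeg hM
  have demand_nonneg := residualDemand_nonneg hM
  have deficit_le : residualDeficit G i j M (G.degree i : ℝ)⁻¹ ≤
      residualDeficit G i j M (G.degree j : ℝ)⁻¹ :=
    sub_le_sub_left
      (mul_le_mul_of_nonneg_left (inv_degree_le_of_adj hij hdeg) (Nat.cast_nonneg _)) _
  have third_supply_nonneg : 0 ≤ residualDeficit G i j M (G.degree i : ℝ)⁻¹ + (G.degree j : ℝ)⁻¹ :=
    (sum_residualSupply hij hM 2).subst (sum_nonneg fun x _ => supply_nonneg 2 x)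
  have second_demand_nonneg :
      0 ≤ residualDeficit G i j M (G.degree j : ℝ)⁻¹ + (G.degree i : ℝ)⁻¹ :=
    (sum_residualDemand hij hM 1).subst (sum_nonneg fun y _ => demand_nonneg 1 y)
  rw [← sum_residualDist_mul_residualFlow]
  exact TransportLE.block supply_nonneg demand_nonneg
    (residualFlow_nonneg (by positivity) (by positivity) deficit_le third_supply_nonneg
      second_demand_nonneg)
    (fun k => (sum_residualFlow_right _ _ _ _ k).trans (sum_residualSupply hij hM k).symm)
    (fun l => (sum_residualFlow_left _ _ _ _ l).trans (sum_residualDemand hij hM l).symm)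
    (dist_le_residualDist hij hM)

theorem transportLE_unif_of_degree_le (hij : G.Adj i j) (hdeg : G.degree i ≤ G.degree j)
    (hM : IsCrossMatching G i j M) :
    TransportLE G (unif G i) (unif G j) (1 - Zmax G i j +
      pos (frakK G i j - #M / rhoMax G i j - Zmin G i j) +
      pos (frakK G i j - #M / rhoMax G i j - Zmax G i j)) := by
  have stationary := TransportLE.constOn_self (G := G)
    (G.neighborFinset i ∩ G.neighborFinset j) (w := (G.degree j : ℝ)⁻¹) (by positivity)
  have matched := hM.transportLE_image (w := (G.degree j : ℝ)⁻¹) (by positivity)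
  have plan := (stationary.add matched).add (transportLE_residual hij hdeg hM)
  rw [← unif_eq_add_sum_residualSupply hij, ← unif_eq_add_sum_residualDemand hij] at plan
  refine plan.mono (le_of_eq ?_)
  simp only [Zmin, Zmax, frakK, rhoMin, rhoMax, min_eq_left hdeg, max_eq_right hdeg,
    residualDeficit, div_eq_mul_inv, one_mul]
  ring

theorem transportLE_unif_of_isCrossMatching (hij : G.Adj i j) (hM : IsCrossMatching G i j M) :
    TransportLE G (unif G i) (unif G j) (1 - Zmax G i j +
      pos (frakK G i j - #M / rhoMax G i j - Zmin G i j) +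
      pos (frakK G i j - #M / rhoMax G i j - Zmax G i j)) := by
  rcases le_total (G.degree i) (G.degree j) with hdeg | hdeg
  · exact transportLE_unif_of_degree_le hij hdeg hM
  · have swapped := (transportLE_unif_of_degree_le hij.symm hdeg hM.swap).symm
    simpa only [Zmin, Zmax, frakK, rhoMin, rhoMax, card_map, tri_comm j i,
      min_comm (G.degree j), max_comm (G.degree j)] using swapped

theorem transportLE_unif (hij : G.Adj i j) :
    TransportLE G (unif G i) (unif G j) (1 - Zmax G i j +
      pos (Ksq G i j - Zmin G i j) + pos (Ksq G i j - Zmax G i j)) := by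
  obtain ⟨M, hM, hcard⟩ := exists_isCrossMatching_card_eq_matchNum (G := G) i j
  have plan := transportLE_unif_of_isCrossMatching hij hM
  rw [hcard, ← SS] at plan
  exact plan.mono (add_le_add (add_le_add_right (pos_mono (sub_le_sub_right (le_pos _) _)) _)
    (pos_mono (sub_le_sub_right (le_pos _) _)))

end Residual

section Envelope

-- With `s = s₀(ϑ)`, `K = 𝔎_□`, `a = ρ_min`, `b = ρ_max`, the three nonzero branches of `u_max` are
-- the shallow line `(s + 2K) / (2/b + 1/a)`, the middle line `b/2 * (s + K)` and the steep line
-- `b * s`.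

theorem middleLine_le_shallowLine_iff {a b K s : ℝ} (ha : 0 < a) (hb : 0 < b) :
    b / 2 * (s + K) ≤ (s + 2 * K) / (2 / b + 1 / a) ↔ s ≤ K * (2 * a / b - 1) := by
  rw [le_div_iff₀ (by positivity), ← sub_nonneg, ← sub_nonneg (b := s)]
  have factor : s + 2 * K - b / 2 * (s + K) * (2 / b + 1 / a) =
      b / (2 * a) * (K * (2 * a / b - 1) - s) := by
    field_simp
    ring
  rw [factor, mul_nonneg_iff_of_pos_left (by positivity)]

theorem steepLine_le_middleLine_iff {b K s : ℝ} (hb : 0 < b) :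
    b * s ≤ b / 2 * (s + K) ↔ s ≤ K := by
  rw [div_mul_eq_mul_div, mul_div_assoc, mul_le_mul_iff_right₀ hb]
  constructor <;> intro h <;> linarith

theorem le_lines_of_sub_pos_le {a b K s x : ℝ} (ha : 0 < a) (hab : a ≤ b) (hx : 0 ≤ x)
    (h : x / b - pos (K - x / a) - pos (K - x / b) ≤ s) :
    x ≤ (s + 2 * K) / (2 / b + 1 / a) ∨ x ≤ b / 2 * (s + K) ∨ x ≤ b * s := by
  have hb : 0 < b := ha.trans_le hab
  have hxab : x / b ≤ x / a := div_le_div_of_nonneg_left hx ha hab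
  rcases le_total (x / a) K with hxa | hxa
  · left
    rw [pos, pos, max_eq_left (by linarith), max_eq_left (by linarith)] at h
    rw [le_div_iff₀ (by positivity)]
    linarith [show x * (2 / b + 1 / a) = 2 * (x / b) + x / a by ring]
  right
  rw [pos, max_eq_right (by linarith), sub_zero] at h
  rcases le_total (x / b) K with hxb | hxb
  · left
    rw [pos, max_eq_left (by linarith)] at h
    have div_le : x / b ≤ (s + K) / 2 := by linarith
    rw [div_le_iff₀ hb] at div_le
    linarith
  · right
    rw [pos, max_eq_right (by linarith), sub_zero, div_le_iff₀' hb] at h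
    exact h

variable {G} {i j : V}

omit [DecidableEq V] in
theorem rhoMin_pos_of_adj (hij : G.Adj i j) : 0 < rhoMin G i j :=
  lt_min (degree_pos_of_adj hij) (degree_pos_of_adj hij.symm)

omit [DecidableEq V] in
theorem rhoMin_le_rhoMax (i j : V) : rhoMin G i j ≤ rhoMax G i j := min_le_max

theorem Ksq_nonneg (i j : V) : 0 ≤ Ksq G i j := pos_nonneg _

theorem lines_le_uMax (hij : G.Adj i j) (t : ℝ) :
    (sZero G i j t + 2 * Ksq G i j) / frakT G i j ≤ uMax G i j t ∧
      rhoMax G i j / 2 * (sZero G i j t + Ksq G i j) ≤ uMax G i j t ∧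
      rhoMax G i j * sZero G i j t ≤ uMax G i j t := by
  have ha : (0 : ℝ) < rhoMin G i j := mod_cast rhoMin_pos_of_adj hij
  have hab : (rhoMin G i j : ℝ) ≤ rhoMax G i j := mod_cast rhoMin_le_rhoMax i j
  have hb := ha.trans_le hab
  have hK := Ksq_nonneg (G := G) i j
  have middle_le_shallow :=
    middleLine_le_shallowLine_iff (K := Ksq G i j) (s := sZero G i j t) ha hb
  have steep_le_middle := steepLine_le_middleLine_iff (K := Ksq G i j) (s := sZero G i j t) hb
  unfold uMax sU frakT
  generalize Ksq G i j = K at *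
  generalize sZero G i j t = s at *
  generalize (rhoMin G i j : ℝ) = a at *
  generalize (rhoMax G i j : ℝ) = b at *
  have sU_le : K * (2 * a / b - 1) ≤ K := by
    have ratio_le : 2 * a / b ≤ 2 := by rw [div_le_iff₀ hb]; linarith
    exact mul_le_of_le_one_right hK (by linarith)
  split_ifs with h₁ h₂ h₃
  · exact ⟨div_nonpos_of_nonpos_of_nonneg (by linarith) (by positivity),
      mul_nonpos_of_nonneg_of_nonpos (by positivity) (by linarith),
      mul_nonpos_of_nonneg_of_nonpos hb.le (by linarith)⟩
  · exact ⟨le_rfl, middle_le_shallow.2 h₂,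
      (steep_le_middle.2 (h₂.trans sU_le)).trans (middle_le_shallow.2 h₂)⟩
  · exact ⟨(not_le.1 (mt middle_le_shallow.1 h₂)).le, le_rfl, steep_le_middle.2 h₃⟩
  · have middle_le_steep := (not_le.1 (mt steep_le_middle.1 h₃)).le
    exact ⟨(not_le.1 (mt middle_le_shallow.1 h₂)).le.trans middle_le_steep, middle_le_steep,
      le_rfl⟩

theorem tri_le_uMax (hij : G.Adj i j) {t : ℝ} (hOR : cOR G i j ≤ t) :
    (tri G i j : ℝ) ≤ uMax G i j t := by
  have curvature := one_sub_le_sZero hij (transportLE_unif hij) hOR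
  have tri_bound : Zmax G i j - pos (Ksq G i j - Zmin G i j) - pos (Ksq G i j - Zmax G i j) ≤
      sZero G i j t := by linarith
  obtain ⟨shallow_le, middle_le, steep_le⟩ := lines_le_uMax hij t
  rcases le_lines_of_sub_pos_le (mod_cast rhoMin_pos_of_adj hij)
      (mod_cast rhoMin_le_rhoMax i j) (Nat.cast_nonneg (tri G i j)) tri_bound with h | h | h
  exacts [h.trans shallow_le, h.trans middle_le, h.trans steep_le]

end Envelope

section BalancedForman

variable {G} {i j : V}

theorem C4_nonneg (i j : V) : 0 ≤ C4 G i j := by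
  unfold C4
  split_ifs <;> positivity

omit [DecidableEq V] in
theorem frakT_nonneg (i j : V) : 0 ≤ frakT G i j := by
  unfold frakT
  positivity

omit [DecidableEq V] in
theorem frakS_nonneg_of_rhoMin_eq_one (h : rhoMin G i j = 1) : 0 ≤ frakS G i j := by
  unfold frakS
  rcases min_choice (G.degree i) (G.degree j) with hmin | hmin <;>
    rw [← hmin, ← rhoMin, h, Nat.cast_one, div_one]
  · linarith [show (0 : ℝ) ≤ 2 / G.degree j by positivity]
  · linarith [show (0 : ℝ) ≤ 2 / G.degree i by positivity]

theorem cBF_le (i j : V) : cBF G i j ≤ frakS G i j + frakT G i j * tri G i j + C4 G i j := by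
  unfold cBF
  split_ifs with h
  · exact add_nonneg (add_nonneg (frakS_nonneg_of_rhoMin_eq_one h)
      (mul_nonneg (frakT_nonneg i j) (Nat.cast_nonneg _))) (C4_nonneg i j)
  · exact le_rfl

end BalancedForman

theorem stmt16_general {i j : V} (hij : G.Adj i j) {t : ℝ} (hOR : cOR G i j ≤ t) :
    cBF G i j ≤ frakS G i j + frakT G i j * uMax G i j t + C4 G i j :=
  (cBF_le i j).trans (add_le_add_left (add_le_add_right
    (mul_le_mul_of_nonneg_left (tri_le_uMax hij hOR) (frakT_nonneg i j)) _) _)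

/-- OR-to-BF upper transfer modulus. -/
theorem stmt16 (hG : G.Connected) (i j : V) (hij : G.Adj i j)
    (hmin : 2 ≤ rhoMin G i j) (t : ℝ) (hOR : cOR G i j ≤ t) :
    cBF G i j ≤ frakS G i j + frakT G i j * uMax G i j t + C4 G i j :=
  stmt16_general G hij hOR

end

end Curv
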